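/- arXiv:1309.6402 — 4 statements merged into one kernel-verified Lean document; each statement's English description precedes it below -/
import Mathlib

section
/- Let (xₙ) be generated by the Algorithm. Then for every n ∈ ℕ, D(xₙ, x₀) ≤ D(x_{n+1}, x₀); consequently the limit limₙ D(xₙ, x₀) exists in [0, +∞] and equals supₙ D(xₙ, x₀). -/
/-!
Since `C (n + 2) ⊆ C (n + 1)`, the point `x (n + 2)` competes in the minimisation that defines
`x (n + 1)`, so the distances to `x 0` increase from index `1` on. As `x 0` need not lie in `C 0`,
the step from `0` to `1` is separate: `D (x 0) (x 0) = 0`, and `D` is nonnegative by the gradient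
inequality (`inner_gradient_le_sub`). A monotone sequence in `[0, ∞]` tends to its supremum.
-/

open scoped RealInnerProductSpace
open Filter Topology

/-- The gradient inequality for a convex function: restrict to the line through `y` and `x`,
where the derivative at the left endpoint is at most the slope of the chord. -/
lemma inner_gradient_le_sub {X : Type*} [NormedAddCommGroup X] [InnerProductSpace ℝ X]
    [CompleteSpace X] {f : X → ℝ} {g y : X} (hf : ConvexOn ℝ Set.univ f)
    (hg : HasGradientAt f g y) (x : X) : ⟪g, x - y⟫ ≤ f x - f y := by
  have hline : HasDerivAt (fun t : ℝ => AffineMap.lineMap y x t) (x - y) 0 :=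
    AffineMap.hasDerivAt_lineMap
  have hg' : HasFDerivAt f (InnerProductSpace.toDual ℝ X g)
      (AffineMap.lineMap y x (0 : ℝ)) := by
    simpa using hg.hasFDerivAt
  have hd : HasDerivAt (f ∘ AffineMap.lineMap y x) ⟪g, x - y⟫ (0 : ℝ) := by
    simpa using hg'.comp_hasDerivAt (0 : ℝ) hline
  have hc : ConvexOn ℝ Set.univ (f ∘ (AffineMap.lineMap y x : ℝ →ᵃ[ℝ] X)) := by
    simpa using hf.comp_affineMap (AffineMap.lineMap y x : ℝ →ᵃ[ℝ] X)
  have h := hc.le_slope_of_hasDerivAt (Set.mem_univ _) (Set.mem_univ _) zero_lt_one hd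
  simpa [slope_def_field] using h

/-- For the sequence generated by the Algorithm, `D(xₙ,x₀) ≤ D(x_{n+1},x₀)`
for every `n`; consequently the limit of `D(xₙ,x₀)` exists in `[0,+∞]` and equals
`supₙ D(xₙ,x₀)`. -/
theorem algorithm_increasing_distances
    {X : Type*} [NormedAddCommGroup X] [InnerProductSpace ℝ X] [FiniteDimensional ℝ X]
    (f : X → ℝ) (f' : X → X)
    (hf : StrictConvexOn ℝ Set.univ f)
    (hf' : ∀ x, HasGradientAt f (f' x) x)
    (D : X → X → ℝ)
    (hD : ∀ x y, D x y = f x - f y - ⟪f' y, x - y⟫)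
    (x y : ℕ → X) (C : ℕ → Set X)
    (hC0cl : IsClosed (C 0)) (hC0cv : Convex ℝ (C 0))
    (hCne : ∀ n, (C n).Nonempty)
    (hCrec : ∀ n, C (n + 1) = C n ∩ {z | D z (y n) ≤ D z (x n)})
    (hxproj : ∀ n, x (n + 1) ∈ C (n + 1) ∧ ∀ c ∈ C (n + 1), D (x (n + 1)) (x 0) ≤ D c (x 0)) :
    (∀ n, D (x n) (x 0) ≤ D (x (n + 1)) (x 0)) ∧
      Tendsto (fun n => ENNReal.ofReal (D (x n) (x 0))) atTop
        (𝓝 (⨆ n, ENNReal.ofReal (D (x n) (x 0)))) := by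
  have hmono : ∀ n, D (x n) (x 0) ≤ D (x (n + 1)) (x 0) := by
    intro n
    cases n with
    | zero =>
      have h := inner_gradient_le_sub hf.convexOn (hf' (x 0)) (x 1)
      have h0 : D (x 0) (x 0) = 0 := by simp [hD]
      rw [h0, zero_add, hD]
      linarith
    | succ n =>
      have hmem := (hxproj (n + 1)).1
      rw [hCrec (n + 1)] at hmem
      exact (hxproj n).2 _ hmem.1
  exact ⟨hmono, tendsto_atTop_iSup
    (monotone_nat_of_le_succ fun n => ENNReal.ofReal_le_ofReal (hmono n))⟩
end

section
/- Let (xₙ) be generated by the Algorithm and suppose that the sequence (xₙ) is bounded. Then ∑_{n=0}^{∞} D(x_{n+1}, xₙ) < +∞, and consequently x_{n+1} − xₙ → 0. -/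
/-!
Each `C n` is convex, since `z ↦ D z (y n) - D z (x n)` is affine. The variational inequality at the
projection `x n` of `x 0` onto `C n`, tested against `x (n + 1) ∈ C n`, gives by the three-point
identity
`D (x (n + 1)) (x n) ≤ D (x (n + 1)) (x 0) - D (x n) (x 0)`
for `n ≥ 1`; for `n = 0` this is an equality because `D (x 0) (x 0) = 0`.
The right-hand sides telescope, and `D (x N) (x 0)` stays bounded because `f` and the linear term are
continuous and `x` ranges in a compact set. As the terms are nonnegative, the series converges.

For the second claim, the gradient inequality at the midpoint `m` of `a` and `b` gives
`f a + f b - 2 f m ≤ D b a`. The left-hand side is continuous in `(a, b)` and, by strict convexity,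
bounded below by a positive constant on pairs of a compact set that are at distance at least `ε`, so
`D (x (n + 1)) (x n) → 0` forces the increments to vanish. Working with the midpoint gap
instead of `D` avoids any appeal to continuity of the gradient.
-/

open scoped RealInnerProductSpace
open Filter Topology

theorem gradient_inequality {X : Type*} [NormedAddCommGroup X] [InnerProductSpace ℝ X]
    [CompleteSpace X] {f : X → ℝ} {g a : X} (hf : ConvexOn ℝ Set.univ f)
    (hg : HasGradientAt f g a) (b : X) : f a + ⟪g, b - a⟫ ≤ f b := by
  have hc := hf.comp_affineMap (AffineMap.lineMap (k := ℝ) a b)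
  have hd : HasDerivAt (f ∘ AffineMap.lineMap (k := ℝ) a b) ⟪g, b - a⟫ (0 : ℝ) := by
    have h1 : HasFDerivAt f (InnerProductSpace.toDual ℝ X g)
        (AffineMap.lineMap (k := ℝ) a b (0 : ℝ)) := by
      simpa using hg.hasFDerivAt
    have h2 := h1.comp_hasDerivAt (0 : ℝ) (AffineMap.hasDerivAt_lineMap (a := a) (b := b))
    simpa using h2
  have := hc.le_slope_of_hasDerivAt (x := 0) (y := 1) (by simp) (by simp) one_pos hd
  simp [slope_def_field] at this
  linarith

/-- The first-order optimality condition for the Bregman projection `p` of `x₀` onto `S`. -/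
theorem bregman_variational_inequality {X : Type*} [NormedAddCommGroup X] [InnerProductSpace ℝ X]
    [CompleteSpace X] {f : X → ℝ} {g g₀ p q x₀ : X} {S : Set X} (hS : Convex ℝ S)
    (hg : HasGradientAt f g p) (hp : p ∈ S) (hq : q ∈ S)
    (hmin : ∀ c ∈ S, f p - f x₀ - ⟪g₀, p - x₀⟫ ≤ f c - f x₀ - ⟪g₀, c - x₀⟫) :
    0 ≤ ⟪g - g₀, q - p⟫ := by
  have hloc : IsLocalMinOn (fun c => f c - InnerProductSpace.toDual ℝ X g₀ c) S p := by
    refine IsMinOn.localize fun c hc => ?_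
    have := hmin c hc
    simp only [inner_sub_right] at this
    simp only [Set.mem_ofPred_eq, InnerProductSpace.toDual_apply_apply]
    linarith
  have h := hloc.hasFDerivWithinAt_nonneg
    (hg.hasFDerivAt.sub (InnerProductSpace.toDual ℝ X g₀).hasFDerivAt).hasFDerivWithinAt
    (sub_mem_posTangentConeAt_of_segment_subset (hS.segment_subset hp hq))
  simpa [inner_sub_left] using h

/-- A uniform form of strict convexity on a compact set: the midpoint gap of `f` is bounded away
from zero on pairs of points at distance at least `ε`. -/
theorem exists_midpoint_gap {X : Type*} [NormedAddCommGroup X] [NormedSpace ℝ X] {f : X → ℝ}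
    (hf : StrictConvexOn ℝ Set.univ f) (hc : Continuous f) {K : Set X} (hK : IsCompact K)
    {ε : ℝ} (hε : 0 < ε) :
    ∃ δ > 0, ∀ a ∈ K, ∀ b ∈ K, ε ≤ ‖b - a‖ →
      δ ≤ f a + f b - 2 * f ((1 / 2 : ℝ) • a + (1 / 2 : ℝ) • b) := by
  have hL : IsCompact ((K ×ˢ K) ∩ {z : X × X | ε ≤ ‖z.2 - z.1‖}) :=
    (hK.prod hK).inter_right (isClosed_le (by fun_prop) (by fun_prop))
  obtain hL0 | hL0 := ((K ×ˢ K) ∩ {z : X × X | ε ≤ ‖z.2 - z.1‖}).eq_empty_or_nonempty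
  · refine ⟨1, one_pos, fun a ha b hb h => ?_⟩
    have : (a, b) ∈ ((K ×ˢ K) ∩ {z : X × X | ε ≤ ‖z.2 - z.1‖}) := ⟨⟨ha, hb⟩, h⟩
    simp [hL0] at this
  · obtain ⟨z, hz, hzmin⟩ := hL.exists_isMinOn hL0
      (f := fun z : X × X => f z.1 + f z.2 - 2 * f ((1 / 2 : ℝ) • z.1 + (1 / 2 : ℝ) • z.2))
      (by fun_prop)
    refine ⟨_, ?_, fun a ha b hb h => hzmin (show (a, b) ∈ _ from ⟨⟨ha, hb⟩, h⟩)⟩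
    have hne : z.1 ≠ z.2 := by
      intro h
      have := hz.2
      simp only [Set.mem_ofPred_eq, h, sub_self, norm_zero] at this
      linarith
    have := hf.2 (Set.mem_univ z.1) (Set.mem_univ z.2) hne (half_pos one_pos)
      (half_pos one_pos) (add_halves (1 : ℝ))
    simp only [smul_eq_mul] at this
    simp only [gt_iff_lt]
    linarith

/-- If the sequence generated by the Algorithm is bounded, then
`∑ₙ D(x_{n+1},xₙ) < +∞` and consequently `x_{n+1} − xₙ → 0`. -/
theorem algorithm_summable_of_bounded
    {X : Type*} [NormedAddCommGroup X] [InnerProductSpace ℝ X] [FiniteDimensional ℝ X]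
    (f : X → ℝ) (f' : X → X)
    (hf : StrictConvexOn ℝ Set.univ f)
    (hf' : ∀ x, HasGradientAt f (f' x) x)
    (D : X → X → ℝ)
    (hD : ∀ x y, D x y = f x - f y - ⟪f' y, x - y⟫)
    (x y : ℕ → X) (C : ℕ → Set X)
    (hC0cl : IsClosed (C 0)) (hC0cv : Convex ℝ (C 0))
    (hCne : ∀ n, (C n).Nonempty)
    (hCrec : ∀ n, C (n + 1) = C n ∩ {z | D z (y n) ≤ D z (x n)})
    (hxproj : ∀ n, x (n + 1) ∈ C (n + 1) ∧ ∀ c ∈ C (n + 1), D (x (n + 1)) (x 0) ≤ D c (x 0))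
    (hxbdd : Bornology.IsBounded (Set.range x)) :
    Summable (fun n => D (x (n + 1)) (x n)) ∧
      Tendsto (fun n => x (n + 1) - x n) atTop (𝓝 0) := by
  have : CompleteSpace X := FiniteDimensional.complete ℝ X
  have hcont : Continuous f := continuous_iff_continuousAt.2 fun a => (hf' a).continuousAt
  have hDnn : ∀ a b, 0 ≤ D a b := fun a b => by
    rw [hD]
    linarith [gradient_inequality hf.convexOn (hf' b) a]
  have hCcv : ∀ n, Convex ℝ (C n) := by
    intro n
    induction n with
    | zero => exact hC0cv
    | succ n ih =>
      rw [hCrec]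
      refine ih.inter ?_
      -- The terms `f z` cancel, so the constraint is a half-space.
      have : {z | D z (y n) ≤ D z (x n)} = {z | InnerProductSpace.toDual ℝ X (f' (x n) - f' (y n)) z
          ≤ f (y n) - f (x n) + ⟪f' (x n), x n⟫ - ⟪f' (y n), y n⟫} := by
        ext z
        simp only [Set.mem_ofPred_eq, hD, InnerProductSpace.toDual_apply_apply, inner_sub_left,
          inner_sub_right]
        constructor <;> intro h <;> linarith
      rw [this]
      exact convex_halfSpace_le (InnerProductSpace.toDual ℝ X _).toLinearMap.isLinear _
  have hstep : ∀ n, D (x (n + 1)) (x n) ≤ D (x (n + 1)) (x 0) - D (x n) (x 0) := by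
    intro n
    cases n with
    | zero => simp [hD]
    | succ n =>
      have hmem : x (n + 1 + 1) ∈ C (n + 1) := by
        have := (hxproj (n + 1)).1
        rw [hCrec] at this
        exact this.1
      have hvi := bregman_variational_inequality (g₀ := f' (x 0)) (x₀ := x 0) (hCcv (n + 1))
        (hf' (x (n + 1))) (hxproj n).1 hmem
        (fun c hc => by simpa only [hD] using (hxproj n).2 c hc)
      simp only [hD, inner_sub_left, inner_sub_right] at hvi ⊢
      linarith
  have hK : IsCompact (closure (Set.range x)) := hxbdd.isCompact_closure
  have hxK : ∀ n, x n ∈ closure (Set.range x) := fun n => subset_closure ⟨n, rfl⟩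
  obtain ⟨M, hM⟩ := hK.bddAbove_image (f := fun z => D z (x 0)) (by
    simp only [hD]
    fun_prop)
  have hsum : Summable (fun n => D (x (n + 1)) (x n)) := by
    refine summable_of_sum_range_le (c := M) (fun n => hDnn _ _) fun n => ?_
    calc ∑ i ∈ Finset.range n, D (x (i + 1)) (x i)
        ≤ ∑ i ∈ Finset.range n, (D (x (i + 1)) (x 0) - D (x i) (x 0)) :=
          Finset.sum_le_sum fun i _ => hstep i
      _ = D (x n) (x 0) - D (x 0) (x 0) := Finset.sum_range_sub (fun i => D (x i) (x 0)) n
      _ ≤ D (x n) (x 0) := by linarith [hDnn (x 0) (x 0)]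
      _ ≤ M := hM ⟨x n, hxK n, rfl⟩
  refine ⟨hsum, ?_⟩
  have hgap : ∀ a b, f a + f b - 2 * f ((1 / 2 : ℝ) • a + (1 / 2 : ℝ) • b) ≤ D b a := by
    intro a b
    have h := gradient_inequality hf.convexOn (hf' a) ((1 / 2 : ℝ) • a + (1 / 2 : ℝ) • b)
    have e : (1 / 2 : ℝ) • a + (1 / 2 : ℝ) • b - a = (1 / 2 : ℝ) • (b - a) := by module
    rw [e, real_inner_smul_right] at h
    rw [hD]
    linarith
  rw [Metric.tendsto_atTop']
  intro ε hε
  obtain ⟨δ, hδ, hδK⟩ := exists_midpoint_gap hf hcont hK hε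
  obtain ⟨N, hN⟩ := eventually_atTop.1 (hsum.tendsto_atTop_zero.eventually_lt_const hδ)
  refine ⟨N, fun n hn => ?_⟩
  rw [dist_zero_right]
  by_contra! h
  linarith [hN n hn.le, hgap (x n) (x (n + 1)), hδK _ (hxK n) _ (hxK (n + 1)) h]
end

section
/- (Dichotomy) Let C ⊆ X be closed and convex, let (xₙ) be generated by the Algorithm, suppose C ⊆ Cₙ for every n ∈ ℕ, and suppose that for every subsequence (x_{kₙ}) of (xₙ): if x_{kₙ} → x̄ and x_{kₙ} − y_{kₙ} → 0, then x̄ ∈ C. Then exactly one of the following holds: (i) C ≠ ∅, xₙ converges to the Bregman projection P_C(x₀), and ∑_{n=0}^{∞} D(x_{n+1}, xₙ) < +∞; (ii) C = ∅ and ‖xₙ‖ → +∞. -/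
open scoped RealInnerProductSpace
open Filter Topology

/-!
The values `D (x n) (x 0)` increase, because `x n` minimises `D · (x 0)` over the decreasing convex
sets `Cn n`; more precisely the three-point inequality `bregman_three_point` gives
`D c (x n) ≤ D c (x 0) - D (x n) (x 0)` for all `c ∈ Cn n`.  When these values are bounded, the
series `∑ D (x (n + 1)) (x n)` is dominated by a telescoping sum.

If moreover `x` has a cluster point `p`, then `p` lies in every `Cn n`, and applying the inequality
to later iterates yields `D p (x n) → 0`; membership in the half-space `H (x n) (y n)` then gives
`D p (y n) → 0` as well.  The boundedness of the sets `{z | D w z ≤ r}` together with strict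
convexity (`tendsto_of_bregman_tendsto_zero`) turns both facts into norm convergence `x n → p` and
`y n → p`, so `p ∈ C` by the hypothesis on subsequences, and `p` is the projection of `x 0`.

If `C` contains a point `c`, then `D c (x n) ≤ D c (x 0)` makes `x` bounded, so a cluster point
exists.  If `‖x n‖` does not tend to infinity, a cluster point exists too, and then `C` is nonempty.
-/

section Bregman

variable {X : Type*} [NormedAddCommGroup X] [InnerProductSpace ℝ X] [FiniteDimensional ℝ X]
  {f : X → ℝ} {f' : X → X} {D : X → X → ℝ}

/-- The gradient inequality for convex functions, stated for the Bregman distance; it is the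
one-dimensional slope inequality along the segment from `w` to `z`. -/
lemma bregman_nonneg (hf : ConvexOn ℝ Set.univ f) (hf' : ∀ x, HasGradientAt f (f' x) x)
    (hD : ∀ x y, D x y = f x - f y - ⟪f' y, x - y⟫) (z w : X) : 0 ≤ D z w := by
  have hφ : ConvexOn ℝ Set.univ (fun t : ℝ => f (AffineMap.lineMap w z t)) := by
    simpa using! hf.comp_affineMap (AffineMap.lineMap w z)
  have hd : HasDerivAt (fun t : ℝ => f (AffineMap.lineMap w z t)) ⟪f' w, z - w⟫ 0 := by
    have h1 : HasFDerivAt f (InnerProductSpace.toDual ℝ X (f' w))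
        (AffineMap.lineMap w z (0 : ℝ)) := by
      simpa using (hf' w).hasFDerivAt
    simpa using! h1.comp_hasDerivAt (0 : ℝ) AffineMap.hasDerivAt_lineMap
  have h := hφ.le_slope_of_hasDerivAt (Set.mem_univ 0) (Set.mem_univ 1) one_pos hd
  simp [slope_def_field] at h
  rw [hD]
  linarith

/-- The variational inequality characterising a Bregman projection `p` of `w` onto a convex set,
written as the generalised Pythagorean inequality. -/
lemma bregman_three_point (hf' : ∀ x, HasGradientAt f (f' x) x)
    (hD : ∀ x y, D x y = f x - f y - ⟪f' y, x - y⟫) {S : Set X} (hS : Convex ℝ S) {p w : X}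
    (hp : p ∈ S) (hmin : ∀ c ∈ S, D p w ≤ D c w) {c : X} (hc : c ∈ S) :
    D c p + D p w ≤ D c w := by
  have hloc : IsLocalMinOn (fun z => D z w) S p := (isMinOn_iff.2 hmin).localize
  have hder : HasFDerivAt (fun z => D z w)
      (InnerProductSpace.toDual ℝ X (f' p) - InnerProductSpace.toDual ℝ X (f' w)) p := by
    have h2 : HasFDerivAt (fun z => ⟪f' w, z - w⟫) (InnerProductSpace.toDual ℝ X (f' w)) p :=
      (InnerProductSpace.toDual ℝ X (f' w)).hasFDerivAt.comp p ((hasFDerivAt_id p).sub_const w)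
    simpa [hD] using! ((hf' p).hasFDerivAt.sub_const (f w)).sub h2
  have h := hloc.hasFDerivWithinAt_nonneg hder.hasFDerivWithinAt
    (sub_mem_posTangentConeAt_of_segment_subset (hS.segment_subset hp hc))
  simp only [sub_apply, InnerProductSpace.toDual_apply_apply] at h
  have h3 : ⟪f' w, c - w⟫ = ⟪f' w, c - p⟫ + ⟪f' w, p - w⟫ := by
    rw [← inner_add_right]; congr 1; abel
  simp only [hD]
  linarith

/-- The estimate `f w + f z - 2 f ((w + z) / 2) ≤ D w z` bounds `D` from below by a
function that is continuous in both arguments, so no continuity of the gradient is needed. -/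
lemma midpoint_le_bregman (hf : ConvexOn ℝ Set.univ f) (hf' : ∀ x, HasGradientAt f (f' x) x)
    (hD : ∀ x y, D x y = f x - f y - ⟪f' y, x - y⟫) (w z : X) :
    f w + f z - 2 * f (midpoint ℝ w z) ≤ D w z := by
  have h := bregman_nonneg hf hf' hD (midpoint ℝ w z) z
  have h2 : midpoint ℝ w z - z = (2 : ℝ)⁻¹ • (w - z) := by
    simp
  rw [hD, h2, inner_smul_right] at h
  rw [hD]
  linarith

/-- Convergence in Bregman distance to `w` implies norm convergence: boundedness of the level sets
gives cluster points, and strict convexity at the midpoint identifies each of them with `w`. -/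
lemma tendsto_of_bregman_tendsto_zero (hf : StrictConvexOn ℝ Set.univ f)
    (hf' : ∀ x, HasGradientAt f (f' x) x)
    (hD : ∀ x y, D x y = f x - f y - ⟪f' y, x - y⟫)
    (hlevbdd : ∀ (w : X) (r : ℝ), Bornology.IsBounded {z | D w z ≤ r})
    {w : X} {z : ℕ → X} (hz : Tendsto (fun n => D w (z n)) atTop (𝓝 0)) :
    Tendsto z atTop (𝓝 w) := by
  have hcont : Continuous f := continuous_iff_continuousAt.2 fun a => (hf' a).continuousAt
  obtain ⟨r, hr⟩ := hz.bddAbove_range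
  have hzr : ∀ n, z n ∈ {u | D w u ≤ r} := fun n => hr ⟨n, rfl⟩
  refine tendsto_of_subseq_tendsto fun ns hns => ?_
  obtain ⟨q, -, ms, hms, hq⟩ :=
    tendsto_subseq_of_bounded (hlevbdd w r) (fun n => hzr (ns n))
  refine ⟨ms, ?_⟩
  suffices h : q = w by rw [← h]; exact hq
  by_contra hne
  have h1 : Tendsto (fun n => f w + f (z (ns (ms n))) - 2 * f (midpoint ℝ w (z (ns (ms n)))))
      atTop (𝓝 (f w + f q - 2 * f (midpoint ℝ w q))) := by
    have hg : Continuous fun u => f w + f u - 2 * f (midpoint ℝ w u) := by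
      have : Continuous fun u : X => midpoint ℝ w u := by
        simp only [midpoint_eq_smul_add]; fun_prop
      fun_prop
    exact (hg.tendsto q).comp hq
  have h2 := le_of_tendsto_of_tendsto' h1 (hz.comp (hns.comp hms.tendsto_atTop))
    (fun n => midpoint_le_bregman hf.convexOn hf' hD w _)
  have h3 := hf.2 (Set.mem_univ w) (Set.mem_univ q) (Ne.symm hne)
    (show (0 : ℝ) < 2⁻¹ by norm_num) (show (0 : ℝ) < 2⁻¹ by norm_num) (by norm_num)
  rw [← smul_add, ← invOf_eq_inv, ← midpoint_eq_smul_add] at h3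
  simp only [smul_eq_mul, invOf_eq_inv] at h3
  linarith

end Bregman

/-- **dichotomy.** Let `C` be closed and convex with `C ⊆ Cₙ` for all `n`,
and suppose every subsequence of `(xₙ)` converging to some `x̄` with `x_{kₙ} − y_{kₙ} → 0`
has `x̄ ∈ C`.  Then exactly one of the following holds:
(i) `C ≠ ∅`, `xₙ → P_C(x₀)` and `∑ₙ D(x_{n+1},xₙ) < +∞`;
(ii) `C = ∅` and `‖xₙ‖ → +∞`. -/
theorem algorithm_dichotomy
    {X : Type*} [NormedAddCommGroup X] [InnerProductSpace ℝ X] [FiniteDimensional ℝ X]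
    (f : X → ℝ) (f' : X → X)
    (hf : StrictConvexOn ℝ Set.univ f)
    (hf' : ∀ x, HasGradientAt f (f' x) x)
    (D : X → X → ℝ)
    (hD : ∀ x y, D x y = f x - f y - ⟪f' y, x - y⟫)
    (x y : ℕ → X) (Cn : ℕ → Set X)
    (hC0cl : IsClosed (Cn 0)) (hC0cv : Convex ℝ (Cn 0))
    (hCne : ∀ n, (Cn n).Nonempty)
    (hCrec : ∀ n, Cn (n + 1) = Cn n ∩ {z | D z (y n) ≤ D z (x n)})
    (hxproj : ∀ n, x (n + 1) ∈ Cn (n + 1) ∧ ∀ c ∈ Cn (n + 1), D (x (n + 1)) (x 0) ≤ D c (x 0))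
    (hlevbdd : ∀ (w : X) (r : ℝ), Bornology.IsBounded {z | D w z ≤ r})
    (C : Set X) (hCcl : IsClosed C) (hCcv : Convex ℝ C)
    (hCsub : ∀ n, C ⊆ Cn n)
    (hsub : ∀ k : ℕ → ℕ, StrictMono k → ∀ xbar : X,
      Tendsto (fun n => x (k n)) atTop (𝓝 xbar) →
      Tendsto (fun n => x (k n) - y (k n)) atTop (𝓝 0) → xbar ∈ C) :
    Xor'
      (C.Nonempty ∧
        (∃ p, (p ∈ C ∧ ∀ c ∈ C, D p (x 0) ≤ D c (x 0)) ∧ Tendsto x atTop (𝓝 p)) ∧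
        Summable (fun n => D (x (n + 1)) (x n)))
      (C = ∅ ∧ Tendsto (fun n => ‖x n‖) atTop atTop) := by
  have hcont : Continuous f := continuous_iff_continuousAt.2 fun a => (hf' a).continuousAt
  have hDcont : ∀ w, Continuous fun z => D z w := by
    intro w; simp only [hD]; fun_prop
  have hDself : ∀ w, D w w = 0 := by intro w; simp [hD]
  have hDnn := bregman_nonneg hf.convexOn hf' hD
  -- `f` cancels in the inequality defining `H (x n) (y n)`, which leaves a closed half-space.
  have hH : ∀ n, {z | D z (y n) ≤ D z (x n)} = {z | ⟪f' (x n) - f' (y n), z⟫ ≤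
      f (y n) - f (x n) + ⟪f' (x n), x n⟫ - ⟪f' (y n), y n⟫} := by
    intro n; ext z
    simp only [Set.mem_ofPred_eq, hD, inner_sub_left, inner_sub_right]
    constructor <;> intro h <;> linarith
  have hCncl : ∀ n, IsClosed (Cn n) := by
    intro n
    induction n with
    | zero => exact hC0cl
    | succ n ih =>
      rw [hCrec, hH]
      exact ih.inter (isClosed_le (by fun_prop) (by fun_prop))
  have hCncv : ∀ n, Convex ℝ (Cn n) := by
    intro n
    induction n with
    | zero => exact hC0cv
    | succ n ih =>
      rw [hCrec, hH]
      exact ih.inter (convex_halfSpace_le (innerₗ X (f' (x n) - f' (y n))).isLinear _)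
  have hanti : Antitone Cn := antitone_nat_of_succ_le fun n => by
    rw [hCrec]; exact Set.inter_subset_left
  have key : ∀ n, ∀ c ∈ Cn n, D c (x n) + D (x n) (x 0) ≤ D c (x 0) := by
    intro n c hc
    cases n with
    | zero => simp [hDself]
    | succ n =>
      exact bregman_three_point hf' hD (hCncv _) (hxproj n).1 (hxproj n).2 hc
  -- `x 0` need not lie in `Cn 0`, so only later iterates are known to belong to earlier sets.
  have hxmem : ∀ n m, n < m → x m ∈ Cn n := by
    intro n m h
    obtain ⟨k, rfl⟩ : ∃ k, m = k + 1 := ⟨m - 1, by omega⟩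
    exact hanti h.le (hxproj k).1
  have hmono : Monotone fun n => D (x n) (x 0) := monotone_nat_of_le_succ fun n => by
    have := key n _ (hxmem n (n + 1) n.lt_succ_self)
    have := hDnn (x (n + 1)) (x n)
    linarith
  have hmain : ∀ (p : X) (k : ℕ → ℕ), StrictMono k → Tendsto (x ∘ k) atTop (𝓝 p) →
      p ∈ C ∧ (∀ c ∈ C, D p (x 0) ≤ D c (x 0)) ∧ Tendsto x atTop (𝓝 p) ∧
        Summable (fun n => D (x (n + 1)) (x n)) := by
    intro p k hk hkp
    have hpC : ∀ n, p ∈ Cn n := by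
      intro n
      refine (hCncl n).mem_of_tendsto hkp ?_
      filter_upwards [eventually_gt_atTop n] with m hm
      exact hxmem n _ (lt_of_lt_of_le hm (hk.id_le m))
    have hβk : Tendsto (fun n => D (x (k n)) (x 0)) atTop (𝓝 (D p (x 0))) :=
      ((hDcont (x 0)).tendsto p).comp hkp
    have hβ : Tendsto (fun n => D (x n) (x 0)) atTop (𝓝 (D p (x 0))) :=
      (tendsto_iff_tendsto_subseq_of_monotone hmono hk.tendsto_atTop).2 hβk
    have hDx : Tendsto (fun n => D p (x n)) atTop (𝓝 0) := by
      refine squeeze_zero (fun n => hDnn _ _) (fun n => ?_)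
        (by simpa using hβ.const_sub (D p (x 0)))
      have := key n p (hpC n)
      linarith
    have hDy : Tendsto (fun n => D p (y n)) atTop (𝓝 0) := by
      refine squeeze_zero (fun n => hDnn _ _) (fun n => ?_) hDx
      have := hpC (n + 1)
      rw [hCrec] at this
      exact this.2
    have hx := tendsto_of_bregman_tendsto_zero hf hf' hD hlevbdd hDx
    have hy := tendsto_of_bregman_tendsto_zero hf hf' hD hlevbdd hDy
    refine ⟨hsub id strictMono_id p hx (by simpa using! hx.sub hy), ?_, hx, ?_⟩
    · intro c hc
      refine le_of_tendsto' hβ fun n => ?_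
      have := key n c (hCsub n hc)
      have := hDnn c (x n)
      linarith
    · refine summable_of_sum_range_le (c := D p (x 0)) (fun n => hDnn _ _) fun n => ?_
      have h1 : ∑ i ∈ Finset.range n, D (x (i + 1)) (x i) ≤
          ∑ i ∈ Finset.range n, (D (x (i + 1)) (x 0) - D (x i) (x 0)) :=
        Finset.sum_le_sum fun i _ => by
          have := key i _ (hxmem i (i + 1) i.lt_succ_self)
          linarith
      rw [Finset.sum_range_sub (fun i => D (x i) (x 0)), hDself] at h1
      have := hmono.ge_of_tendsto hβ n
      linarith
  rcases C.eq_empty_or_nonempty with hC | ⟨c, hc⟩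
  · refine Or.inr ⟨⟨hC, ?_⟩, fun h => h.1.ne_empty hC⟩
    by_contra hnot
    rw [tendsto_atTop] at hnot
    push Not at hnot
    obtain ⟨R, hR⟩ := hnot
    obtain ⟨p, -, k, hk, hkp⟩ := tendsto_subseq_of_frequently_bounded
      (Metric.isBounded_ball (x := (0 : X)) (r := R))
      (hR.mono fun n hn => by simpa using hn)
    have := (hmain p k hk hkp).1
    simp [hC] at this
  · refine Or.inl ⟨?_, fun h => by simp [h.1] at hc⟩
    obtain ⟨p, -, k, hk, hkp⟩ := tendsto_subseq_of_bounded (hlevbdd c (D c (x 0)))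
      (x := x) (fun n => by
        have := key n c (hCsub n hc)
        have := hDnn (x n) (x 0)
        show D c (x n) ≤ _
        linarith)
    obtain ⟨h1, h2, h3, h4⟩ := hmain p k hk hkp
    exact ⟨⟨c, hc⟩, ⟨p, ⟨h1, h2⟩, h3⟩, h4⟩
end

section
/- The Bregman subgradient projector Q_s is fixed-point closed: for every sequence (xₙ) in X with xₙ → x̄ and xₙ − Q_s(xₙ) → 0, one has Q_s(x̄) = x̄ (equivalently, g(x̄) ≤ 0). -/
open scoped RealInnerProductSpace
open Filter Topology

/-!
Membership of `Q z` in the halfspace at `z` reads `g z ≤ ⟪s z, z - Q z⟫`. Subgradients of a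
continuous convex function are bounded on bounded sets (`exists_subgradient_bound`), so along the
sequence the right-hand side tends to `0`, and continuity gives `g x̄ ≤ 0`. Then `x̄` lies in its own
halfspace, so `D (Q x̄) x̄ ≤ D x̄ x̄ = 0`; by strict convexity of `f` the Bregman distance is positive
off the diagonal (`bregman_pos`), and hence `Q x̄ = x̄`.
-/

section Helpers

variable {X : Type*} [NormedAddCommGroup X] [InnerProductSpace ℝ X]

/-- A strictly convex function lies strictly above its tangents: the restriction of `f` to the line
through `x` and `p` has derivative `⟪f' x, p - x⟫` at `0`, which is less than its slope on
`[0, 1]`. -/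
lemma bregman_pos [CompleteSpace X] {f : X → ℝ} (hf : StrictConvexOn ℝ Set.univ f)
    {v x p : X} (hv : HasGradientAt f v x) (hne : p ≠ x) :
    0 < f p - f x - ⟪v, p - x⟫ := by
  have hline : HasDerivAt (AffineMap.lineMap x p : ℝ → X) (p - x) 0 :=
    AffineMap.hasDerivAt_lineMap
  have hder : HasDerivAt (f ∘ (AffineMap.lineMap x p : ℝ → X)) ⟪v, p - x⟫ 0 := by
    have h := HasFDerivAt.comp_hasDerivAt_of_eq (0 : ℝ) hv.hasFDerivAt hline (by simp)
    simpa using h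
  have hconv : StrictConvexOn ℝ Set.univ (f ∘ (AffineMap.lineMap x p : ℝ → X)) := by
    refine ⟨convex_univ, fun t _ u _ htu α β hα hβ hαβ => ?_⟩
    have hne' : AffineMap.lineMap x p t ≠ AffineMap.lineMap x p u :=
      (AffineMap.lineMap_injective ℝ hne.symm).ne htu
    have h := hf.2 (Set.mem_univ _) (Set.mem_univ _) hne' hα hβ hαβ
    rwa [← Convex.combo_affine_apply hαβ] at h
  have h := hconv.lt_slope_of_hasDerivAt (Set.mem_univ 0) (Set.mem_univ 1) one_pos hder
  simp [slope_def_field] at h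
  linarith

/-- Testing the subgradient inequality at the point at unit distance from `z` in the direction
`s z` bounds `‖s z‖` by the oscillation of `g` on a ball. -/
lemma exists_subgradient_bound [ProperSpace X] {g : X → ℝ} (hg : Continuous g) {s : X → X}
    (hs : ∀ z w, g z + ⟪s z, w - z⟫ ≤ g w) (x : X) :
    ∃ C, ∀ z ∈ Metric.closedBall x 1, ‖s z‖ ≤ C := by
  obtain ⟨C, hC⟩ := (isCompact_closedBall x 2).exists_bound_of_continuousOn hg.continuousOn
  refine ⟨2 * C, fun z hz => ?_⟩
  rw [Metric.mem_closedBall] at hz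
  have hz' := hC z (Metric.closedBall_subset_closedBall one_le_two hz)
  rcases eq_or_ne (s z) 0 with h0 | h0
  · rw [h0, norm_zero]
    linarith [norm_nonneg (g z)]
  have hn : ‖s z‖ ≠ 0 := norm_ne_zero_iff.2 h0
  have hw := hC (z + ‖s z‖⁻¹ • s z) (by
    rw [Metric.mem_closedBall]
    have h1 : dist (z + ‖s z‖⁻¹ • s z) z = 1 := by
      rw [dist_eq_norm, add_sub_cancel_left, norm_smul, norm_inv, norm_norm, inv_mul_cancel₀ hn]
    linarith [dist_triangle (z + ‖s z‖⁻¹ • s z) z x])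
  have h := hs z (z + ‖s z‖⁻¹ • s z)
  have hi : ⟪s z, z + ‖s z‖⁻¹ • s z - z⟫ = ‖s z‖ := by
    rw [add_sub_cancel_left, real_inner_smul_right, real_inner_self_eq_norm_sq]
    field_simp
  rw [hi] at h
  rw [Real.norm_eq_abs] at hz' hw
  linarith [neg_abs_le (g z), le_abs_self (g (z + ‖s z‖⁻¹ • s z))]

end Helpers

/-- The Bregman subgradient projector `Q_s` is fixed-point closed:
if `xₙ → x̄` and `xₙ − Q_s(xₙ) → 0`, then `Q_s(x̄) = x̄` (equivalently `g(x̄) ≤ 0`). -/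
theorem bregman_subgradient_projector_fixed_point_closed
    {X : Type*} [NormedAddCommGroup X] [InnerProductSpace ℝ X] [FiniteDimensional ℝ X]
    (f : X → ℝ) (f' : X → X)
    (hf : StrictConvexOn ℝ Set.univ f)
    (hf' : ∀ x, HasGradientAt f (f' x) x)
    (D : X → X → ℝ)
    (hD : ∀ x y, D x y = f x - f y - ⟪f' y, x - y⟫)
    (g : X → ℝ) (hgcont : Continuous g) (hgcv : ConvexOn ℝ Set.univ g)
    (hlev : {x : X | g x ≤ 0}.Nonempty)
    (s : X → X) (hs : ∀ z w, g z + ⟪s z, w - z⟫ ≤ g w)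
    (Q : X → X)
    (hQ : ∀ z, Q z ∈ {x : X | g z + ⟪s z, x - z⟫ ≤ 0} ∧
      ∀ c ∈ {x : X | g z + ⟪s z, x - z⟫ ≤ 0}, D (Q z) z ≤ D c z)
    (a : ℕ → X) (xbar : X)
    (ha : Tendsto a atTop (𝓝 xbar))
    (haQ : Tendsto (fun n => a n - Q (a n)) atTop (𝓝 0)) :
    Q xbar = xbar ∧ g xbar ≤ 0 := by
  have hgx : g xbar ≤ 0 := by
    obtain ⟨C, hC⟩ := exists_subgradient_bound hgcont hs xbar
    have hlim : Tendsto (fun n => C * ‖a n - Q (a n)‖) atTop (𝓝 0) := by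
      simpa using haQ.norm.const_mul C
    refine le_of_tendsto_of_tendsto ((hgcont.tendsto xbar).comp ha) hlim ?_
    filter_upwards [ha (Metric.closedBall_mem_nhds xbar one_pos)] with n hn
    have h1 : g (a n) + ⟪s (a n), Q (a n) - a n⟫ ≤ 0 := (hQ (a n)).1
    rw [← neg_sub (a n) (Q (a n)), inner_neg_right] at h1
    have h2 := real_inner_le_norm (s (a n)) (a n - Q (a n))
    have h3 := mul_le_mul_of_nonneg_right (hC (a n) hn) (norm_nonneg (a n - Q (a n)))
    simp only [Function.comp_apply]
    linarith
  refine ⟨?_, hgx⟩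
  by_contra hne
  have h := (hQ xbar).2 xbar (by simpa using hgx)
  have hpos := bregman_pos hf (hf' xbar) hne
  simp only [hD, sub_self, inner_zero_right] at h
  linarith
end
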